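/- arXiv:1602.00768 — 3 statements merged into one kernel-verified Lean document; each statement's English description precedes it below -/
import Mathlib

section
/- For x ∈ S_n', the following are equivalent: (i) dim ker x = 2; (ii) ker x = span{u_1, u_{m+n+1}}; (iii) x u_1 = x u_{m+n+1} = 0, i.e. the matrix entries x_{m+n,1}, x_{m+2n,1}, x_{m+n,m+n+1}, x_{m+2n,m+n+1} all vanish. (Content of Lemma 2.2 of the paper: when x has two-dimensional kernel, the kernel is span{e_1, f_1}.) -/
/-!
Outside the rows `m+n` and `m+2n` an element `x` of the slice acts as `z_n`, so there
`(x v)_i = v_{i+1}` (`slice'_apply`). Hence `x v = 0` forces every coordinate of `v` other than the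
first and the `(m+n+1)`-st to vanish: `ker x` always lies in the plane `span{u_1, u_{m+n+1}}`
(`ker_le_span`). So `ker x` has dimension two exactly when it is equal to this plane, which happens
exactly when `x` kills both spanning vectors. By the same description of the rows, `x u_1` and
`x u_{m+n+1}` can be nonzero only in rows `m+n` and `m+2n`, which gives the criterion by entries.

Matrix indices in `Fin (m+2n)` start at `0`, so rows `m+n` and `m+2n` are those `i` with
`i + 1 = m + n` and `i + 1 = m + 2n`.
-/

open Module BigOperators

noncomputable section

/-- The `k`-th standard basis vector `u_k` of `ℂ^(m+2n)`, indexed `1`-based;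
it is zero if `k` is out of the range `1, …, m+2n`. -/
def stdVec (m n : ℕ) (k : ℕ) : Fin (m + 2*n) → ℂ := fun i => if (i : ℕ) + 1 = k then 1 else 0

/-- The matrix of the two-block nilpotent `z_n` of Jordan type `(m+n, n)`:
`z_n u_i = u_{i-1}` for `2 ≤ i ≤ m+n` and for `m+n+2 ≤ i ≤ m+2n`, and
`z_n u_1 = z_n u_{m+n+1} = 0`. -/
def zMat (m n : ℕ) : Matrix (Fin (m + 2*n)) (Fin (m + 2*n)) ℂ :=
  fun i j => if (j : ℕ) = (i : ℕ) + 1 ∧ (j : ℕ) ≠ m + n then 1 else 0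

/-- The two-block nilpotent `z_n` as an endomorphism of `ℂ^(m+2n)`. -/
def zn (m n : ℕ) : Module.End ℂ (Fin (m + 2*n) → ℂ) := Matrix.toLin' (zMat m n)

/-- The enlarged slice `S_n' ⊆ End(ℂ^(m+2n))`: the endomorphisms whose matrix agrees
with that of `z_n` outside rows `m+n` and `m+2n`, i.e. `x u_j - z_n u_j` lies in
`span{u_{m+n}, u_{m+2n}}` for every `j`. -/
def slice' (m n : ℕ) : Set (Module.End ℂ (Fin (m + 2*n) → ℂ)) :=
  { x | ∀ j : ℕ, x (stdVec m n j) - zn m n (stdVec m n j) ∈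
      Submodule.span ℂ {stdVec m n (m + n), stdVec m n (m + 2*n)} }

/-- The matrix entry `x_{p,q}` (`1`-based) of an endomorphism of `ℂ^(m+2n)`
in the standard basis `u_1, …, u_{m+2n}`. -/
def entry (m n : ℕ) (x : Module.End ℂ (Fin (m + 2*n) → ℂ)) (p q : ℕ) : ℂ :=
  ∑ i, stdVec m n p i * x (stdVec m n q) i


theorem stdVec_succ (m n : ℕ) (i : Fin (m + 2*n)) :
    stdVec m n ((i : ℕ) + 1) = Pi.single i 1 := by
  ext j
  simp [stdVec, Pi.single_apply, Fin.ext_iff]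

theorem slice'_sub_mem {m n : ℕ} {x : Module.End ℂ (Fin (m + 2*n) → ℂ)} (hx : x ∈ slice' m n)
    (v : Fin (m + 2*n) → ℂ) :
    x v - zn m n v ∈ Submodule.span ℂ {stdVec m n (m + n), stdVec m n (m + 2*n)} := by
  have hv : v = ∑ j, v j • stdVec m n ((j : ℕ) + 1) := by
    simp only [stdVec_succ]
    exact pi_eq_sum_univ' v
  rw [← LinearMap.sub_apply, hv, map_sum]
  refine Submodule.sum_mem _ fun j _ => ?_
  rw [map_smul]
  exact Submodule.smul_mem _ _ (hx _)

/-- Outside the two free rows, `x` shifts coordinates just as `z_n` does. The exception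
`j ≠ m + n` in `zMat` plays no role there, since it concerns row `m + n` only. -/
theorem slice'_apply {m n : ℕ} {x : Module.End ℂ (Fin (m + 2*n) → ℂ)} (hx : x ∈ slice' m n)
    (v : Fin (m + 2*n) → ℂ) (i j : Fin (m + 2*n)) (hij : (j : ℕ) = i + 1)
    (h1 : (i : ℕ) + 1 ≠ m + n) : x v i = v j := by
  have h2 : (i : ℕ) + 1 ≠ m + 2*n := by have := j.isLt; omega
  obtain ⟨a, b, hab⟩ := Submodule.mem_span_pair.1 (slice'_sub_mem hx v)
  have h := congrFun hab i
  have hz : zn m n v i = v j := by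
    rw [zn, Matrix.toLin'_apply, Matrix.mulVec, dotProduct, Finset.sum_eq_single j]
    · simp [zMat, hij, h1]
    · intro k _ hk
      have : (k : ℕ) ≠ i + 1 := fun h => hk (Fin.ext (h.trans hij.symm))
      simp [zMat, this]
    · simp
  simp only [Pi.add_apply, Pi.smul_apply, stdVec, if_neg h1, if_neg h2, Pi.sub_apply, hz] at h
  simp only [smul_zero, add_zero] at h
  exact (sub_eq_zero.1 h.symm)

theorem ker_le_span {m n : ℕ} (hn : 1 ≤ n) {x : Module.End ℂ (Fin (m + 2*n) → ℂ)}
    (hx : x ∈ slice' m n) :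
    LinearMap.ker x ≤ Submodule.span ℂ {stdVec m n 1, stdVec m n (m + n + 1)} := by
  intro v hv
  rw [LinearMap.mem_ker] at hv
  have hN0 : 0 < m + 2*n := by omega
  have hN1 : m + n < m + 2*n := by omega
  refine Submodule.mem_span_pair.2 ⟨v ⟨0, hN0⟩, v ⟨m + n, hN1⟩, ?_⟩
  ext j
  simp only [Pi.add_apply, Pi.smul_apply, stdVec, smul_eq_mul]
  by_cases h0 : (j : ℕ) = 0
  · obtain rfl : j = ⟨0, hN0⟩ := Fin.ext h0
    simp
    omega
  by_cases h1 : (j : ℕ) = m + n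
  · obtain rfl : j = ⟨m + n, hN1⟩ := Fin.ext h1
    have : ¬ (m + n = 0) := by omega
    simp only [Nat.add_eq_right, this, if_false]
    simp
  · have h := slice'_apply hx v ⟨j - 1, by omega⟩ j (by simp; omega) (by simp; omega)
    rw [hv] at h
    simp [h0, h1, ← h]

theorem finrank_span_stdVec {m n : ℕ} (hn : 1 ≤ n) :
    Module.finrank ℂ (Submodule.span ℂ {stdVec m n 1, stdVec m n (m + n + 1)}) = 2 := by
  have hli : LinearIndependent ℂ ![stdVec m n 1, stdVec m n (m + n + 1)] := by
    rw [LinearIndependent.pair_iff]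
    intro s t h
    have ha := congrFun h ⟨0, by omega⟩
    have hb := congrFun h ⟨m + n, by omega⟩
    have h0 : ¬ (m + n = 0) := by omega
    have h0' : ¬ (1 = m + n + 1) := by omega
    simp only [Pi.add_apply, Pi.smul_apply, stdVec, smul_eq_mul, Pi.zero_apply,
      Nat.add_eq_right, h0, h0', zero_add, if_true, if_false,
      mul_one, mul_zero, add_zero] at ha hb
    exact ⟨ha, hb⟩
  have h := finrank_span_eq_card hli
  rwa [Matrix.range_cons_cons_empty, Fintype.card_fin] at h

theorem entry_succ (m n : ℕ) (x : Module.End ℂ (Fin (m + 2*n) → ℂ)) (i : Fin (m + 2*n)) (q : ℕ) :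
    entry m n x ((i : ℕ) + 1) q = x (stdVec m n q) i := by
  simp [entry, stdVec_succ, Pi.single_apply]

/-- Columns `1` and `m+n+1` of `z_n` are zero, so such a column of `x` vanishes as soon as its
entries in the two free rows do. -/
theorem apply_stdVec_eq_zero {m n : ℕ} {x : Module.End ℂ (Fin (m + 2*n) → ℂ)}
    (hx : x ∈ slice' m n) {q : ℕ} (hq : q = 1 ∨ q = m + n + 1)
    (h1 : entry m n x (m + n) q = 0) (h2 : entry m n x (m + 2*n) q = 0) :
    x (stdVec m n q) = 0 := by
  ext i
  by_cases hi1 : (i : ℕ) + 1 = m + n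
  · rw [← hi1, entry_succ] at h1
    exact h1
  by_cases hi2 : (i : ℕ) + 1 = m + 2*n
  · rw [← hi2, entry_succ] at h2
    exact h2
  rw [slice'_apply hx _ i ⟨i + 1, by omega⟩ rfl hi1, stdVec, if_neg]
  · rfl
  · simp only
    omega

/-- For `x ∈ S_n'`, the following are equivalent:
(i) `dim ker x = 2`; (ii) `ker x = span{u_1, u_{m+n+1}}`;
(iii) `x u_1 = x u_{m+n+1} = 0`; (iv) the matrix entries
`x_{m+n,1}, x_{m+2n,1}, x_{m+n,m+n+1}, x_{m+2n,m+n+1}` all vanish. -/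
theorem slice'_two_dim_ker_tfae (m n : ℕ) (hn : 1 ≤ n)
    (x : Module.End ℂ (Fin (m + 2*n) → ℂ)) (hx : x ∈ slice' m n) :
    List.TFAE [
      Module.finrank ℂ (LinearMap.ker x) = 2,
      LinearMap.ker x = Submodule.span ℂ {stdVec m n 1, stdVec m n (m + n + 1)},
      x (stdVec m n 1) = 0 ∧ x (stdVec m n (m + n + 1)) = 0,
      entry m n x (m + n) 1 = 0 ∧ entry m n x (m + 2*n) 1 = 0 ∧
        entry m n x (m + n) (m + n + 1) = 0 ∧ entry m n x (m + 2*n) (m + n + 1) = 0 ] := by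
  tfae_have 1 → 2 := fun h =>
    Submodule.eq_of_le_of_finrank_eq (ker_le_span hn hx) (h.trans (finrank_span_stdVec hn).symm)
  tfae_have 2 → 1 := fun h => by rw [h, finrank_span_stdVec hn]
  tfae_have 2 → 3 := fun h => by
    simp only [← LinearMap.mem_ker, h]
    exact ⟨Submodule.subset_span (by simp), Submodule.subset_span (by simp)⟩
  tfae_have 3 → 2 := fun h => by
    refine le_antisymm (ker_le_span hn hx) (Submodule.span_le.2 ?_)
    rintro v (rfl | rfl)
    exacts [h.1, h.2]
  tfae_have 3 → 4 := fun h => by simp [entry, h.1, h.2]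
  tfae_have 4 → 3 := fun h =>
    ⟨apply_stdVec_eq_zero hx (Or.inl rfl) h.1 h.2.1,
      apply_stdVec_eq_zero hx (Or.inr rfl) h.2.2.1 h.2.2.2⟩
  tfae_finish
end
end

section
/- If x ∈ S_n' is nilpotent, then for every 1 ≤ p ≤ m+2n the matrix entries (x^{n+1})_{m+n, p} and (x^{m+n+1})_{m+2n, p} vanish. (Vanishing of entries of powers from the proof of Lemma 2.5 of the paper.) -/
/-!
The coordinate functionals `e_1, …, e_N` (`N = m + 2n`) satisfy `e_i ∘ x = e_{i+1}` for every
`x ∈ S_n'` and `i ∉ {m+n, m+2n}` (`coord_slice'`), since outside these two rows `x` has the matrix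
of `z_n`. Hence `e_{m+n} = e_1 ∘ x^(m+n-1)` and `e_{m+2n} = e_{m+n+1} ∘ x^(n-1)`, so
`e_{m+n} ∘ x^(n+1) = e_1 ∘ x^N` and `e_{m+2n} ∘ x^(m+n+1) = e_{m+n+1} ∘ x^N`. Both vanish because
a nilpotent endomorphism of an `N`-dimensional space satisfies `x^N = 0`.
-/

open Module BigOperators

noncomputable section

theorem stdVec_succ_eq_single (m n : ℕ) (j : Fin (m + 2*n)) :
    stdVec m n (j + 1) = Pi.single j 1 := by
  ext i
  simp [stdVec, Pi.single_apply, Fin.ext_iff]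

theorem entry_eq_apply (m n : ℕ) (x : Module.End ℂ (Fin (m + 2*n) → ℂ)) (i : Fin (m + 2*n))
    (q : ℕ) : entry m n x (i + 1) q = x (stdVec m n q) i := by
  simp [entry, stdVec_succ_eq_single, Pi.single_apply]

/-- Elements of `span{u_{m+n}, u_{m+2n}}` have zero coordinates away from these two indices. -/
theorem coord_eq_zero_of_mem_span (m n : ℕ) (i : Fin (m + 2*n)) (h1 : (i : ℕ) + 1 ≠ m + n)
    (h2 : (i : ℕ) + 1 ≠ m + 2*n) (v : Fin (m + 2*n) → ℂ)
    (hv : v ∈ Submodule.span ℂ {stdVec m n (m + n), stdVec m n (m + 2*n)}) : v i = 0 := by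
  obtain ⟨a, b, rfl⟩ := Submodule.mem_span_pair.1 hv
  simp [stdVec, h1, h2]

/-- The relation `e_{i+1} ∘ x = e_{i+2}` in the `1`-based indexing of the coordinate functionals
(`i` is `0`-based), valid when row `i` is not one of the two free rows. -/
theorem coord_slice' (m n : ℕ) (x : Module.End ℂ (Fin (m + 2*n) → ℂ)) (hx : x ∈ slice' m n)
    (i : ℕ) (hi : i + 1 < m + 2*n) (h1 : i + 1 ≠ m + n) (v : Fin (m + 2*n) → ℂ) :
    x v ⟨i, by omega⟩ = v ⟨i + 1, hi⟩ := by
  have key : (LinearMap.proj ⟨i, by omega⟩ : (Fin (m + 2*n) → ℂ) →ₗ[ℂ] ℂ) ∘ₗ x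
      = LinearMap.proj ⟨i + 1, hi⟩ := by
    refine LinearMap.pi_ext' fun j => LinearMap.ext_ring ?_
    have h := coord_eq_zero_of_mem_span m n ⟨i, by omega⟩ h1 (by simp only; omega) _ (hx (j + 1))
    rw [stdVec_succ_eq_single, Pi.sub_apply, sub_eq_zero] at h
    simp only [LinearMap.comp_apply, LinearMap.proj_apply, LinearMap.single_apply, h, zn,
      Matrix.toLin'_apply, Matrix.mulVec_single_one, Matrix.col_apply, zMat, Pi.single_apply,
      Fin.ext_iff]
    grind
  exact LinearMap.congr_fun key v

/-- Iterating `coord_slice'` from row `i` to row `i + k`, none of the rows passed being free. -/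
theorem coord_slice'_pow (m n : ℕ) (x : Module.End ℂ (Fin (m + 2*n) → ℂ)) (hx : x ∈ slice' m n)
    (i k : ℕ) (hi : i + k < m + 2*n) (h1 : i + k < m + n ∨ m + n ≤ i)
    (v : Fin (m + 2*n) → ℂ) :
    (x ^ k) v ⟨i, by omega⟩ = v ⟨i + k, hi⟩ := by
  induction k generalizing v with
  | zero => simp
  | succ k ih =>
    rw [pow_succ, Module.End.mul_apply, ih (by omega) (by omega)]
    exact coord_slice' m n x hx (i + k) hi (by omega) v

theorem pow_dim_eq_zero (N : ℕ) (x : Module.End ℂ (Fin N → ℂ)) (hnil : IsNilpotent x) :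
    x ^ N = 0 := by
  have h := LinearMap.aeval_self_charpoly x
  rw [LinearMap.isNilpotent_iff_charpoly] at hnil
  simpa [hnil] using h

/-- If `x ∈ S_n'` is nilpotent, then for every `1 ≤ p ≤ m+2n` the
matrix entries `(x^(n+1))_{m+n, p}` and `(x^(m+n+1))_{m+2n, p}` vanish. -/
theorem slice'_nilpotent_power_entries_vanish (m n : ℕ) (hn : 1 ≤ n)
    (x : Module.End ℂ (Fin (m + 2*n) → ℂ)) (hx : x ∈ slice' m n)
    (hnil : IsNilpotent x) :
    ∀ p : ℕ, 1 ≤ p → p ≤ m + 2*n →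
      entry m n (x ^ (n + 1)) (m + n) p = 0 ∧
      entry m n (x ^ (m + n + 1)) (m + 2*n) p = 0 := by
  intro p _ _
  have hN := pow_dim_eq_zero _ x hnil
  constructor
  · have e := entry_eq_apply m n (x ^ (n + 1)) ⟨0 + (m + n - 1), by omega⟩ p
    have hc := coord_slice'_pow m n x hx 0 (m + n - 1) (by omega) (by omega)
      ((x ^ (n + 1)) (stdVec m n p))
    rw [← Module.End.mul_apply, ← pow_add, show m + n - 1 + (n + 1) = m + 2*n by omega, hN] at hc
    rw [← hc, show 0 + (m + n - 1) + 1 = m + n by omega] at e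
    simpa using e
  · have e := entry_eq_apply m n (x ^ (m + n + 1)) ⟨m + n + (n - 1), by omega⟩ p
    have hc := coord_slice'_pow m n x hx (m + n) (n - 1) (by omega) (by omega)
      ((x ^ (m + n + 1)) (stdVec m n p))
    rw [← Module.End.mul_apply, ← pow_add, show n - 1 + (m + n + 1) = m + 2*n by omega, hN] at hc
    rw [← hc, show m + n + (n - 1) + 1 = m + 2*n by omega] at e
    simpa using e
end
end

section
/- Let x ∈ S_n' be nilpotent (regarding x as an endomorphism of W via the identification W ≅ ℂ^N). Then there exists a unique subspace L ⊆ V such that: (i) z L ⊆ L; (ii) P restricts to a linear isomorphism from L onto W; and (iii) P ∘ z ∘ (P|_L)^{−1} = x as endomorphisms of W. (Lemma 2.5 of the paper: existence and uniqueness of the z-stable lift L_{m+2n} with P(L_{m+2n}) = W_{m,n} and P z P^{−1} = x.) -/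
/-!
Write `N = m + 2n`. Reading coordinates off powers of the operators determines everything: the
`k`-th coordinate of `v ∈ V` in the `ê`-block (resp. `f̂`-block), counted from `0`, is the first
coordinate of that block in `z^k v`, and the first coordinates of the two blocks survive under `P`.
If `L` satisfies (i)–(iii) and `v ∈ L`, then `P z^k v = x^k P v`, so those coordinates of `v` are
the first, resp. `(m+n+1)`-st, coordinate of `x^k (P v)`. Hence `v = s (P v)` for the explicit
linear map `s = liftMap`, and `L` must be the range of `s`.

Conversely the range of `s` works. Since `x ∈ S_n'`, outside rows `m+n` and `m+2n` it acts as the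
coordinate shift (`slice_apply`), which gives `P ∘ s = id` (`proj_liftMap`); and `z ∘ s = s ∘ x`
(`bigZ_liftMap`) because the only coordinates where it is not immediate are the last ones of the
two blocks, where it says that a coordinate of `x^N w` vanishes, which is nilpotency of `x`.
-/

open Module BigOperators

noncomputable section

/-- The standard basis of `V = ℂ^(2(m+2n))`, indexed `1`-based: for `1 ≤ k ≤ m+2n`,
`bigVec k` is `ê_k`, and for `1 ≤ j ≤ m+2n`, `bigVec (m+2n+j)` is `f̂_j`. -/
def bigVec (m n : ℕ) (k : ℕ) : Fin (2*(m + 2*n)) → ℂ := fun i => if (i : ℕ) + 1 = k then 1 else 0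

/-- The matrix of `z ∈ End(V)`, `z ê_i = ê_{i-1}`, `z f̂_j = f̂_{j-1}` (`ê_0 = f̂_0 = 0`). -/
def bigZMat (m n : ℕ) : Matrix (Fin (2*(m + 2*n))) (Fin (2*(m + 2*n))) ℂ :=
  fun i j => if (j : ℕ) = (i : ℕ) + 1 ∧ (j : ℕ) ≠ m + 2*n then 1 else 0

/-- The endomorphism `z` of `V = ℂ^(2(m+2n))`. -/
def bigZ (m n : ℕ) : Module.End ℂ (Fin (2*(m + 2*n)) → ℂ) := Matrix.toLin' (bigZMat m n)

/-- The matrix of the projection `P : V → W ≅ ℂ^(m+2n)`: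
`P ê_i = u_i` for `i ≤ m+n`, `P ê_i = 0` for `i > m+n`,
`P f̂_j = u_{m+n+j}` for `j ≤ n`, `P f̂_j = 0` for `j > n`. -/
def projMat (m n : ℕ) : Matrix (Fin (m + 2*n)) (Fin (2*(m + 2*n))) ℂ :=
  fun i j => if ((j : ℕ) = (i : ℕ) ∧ (i : ℕ) < m + n) ∨
      ((j : ℕ) = (i : ℕ) + n ∧ m + n ≤ (i : ℕ)) then 1 else 0

/-- The projection `P : V → W ≅ ℂ^(m+2n)` (composed with the identification `W ≅ ℂ^(m+2n)`
via `ê_i ↦ u_i`, `f̂_j ↦ u_{m+n+j}`). -/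
def proj (m n : ℕ) : (Fin (2*(m + 2*n)) → ℂ) →ₗ[ℂ] (Fin (m + 2*n) → ℂ) :=
  Matrix.toLin' (projMat m n)

theorem bigZ_apply_of_ne (m n : ℕ) (v : Fin (2*(m + 2*n)) → ℂ) (i : ℕ)
    (h : i + 1 < 2*(m + 2*n)) (hne : i + 1 ≠ m + 2*n) :
    bigZ m n v ⟨i, by omega⟩ = v ⟨i + 1, h⟩ := by
  simp only [bigZ, Matrix.toLin'_apply, Matrix.mulVec, dotProduct, bigZMat]
  rw [Finset.sum_eq_single ⟨i + 1, h⟩]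
  · simp [hne]
  · intro b _ hb
    rw [if_neg, zero_mul]
    rintro ⟨h1, _⟩
    exact hb (Fin.ext h1)
  · simp

theorem bigZ_apply_last (m n : ℕ) (v : Fin (2*(m + 2*n)) → ℂ) (i : Fin (2*(m + 2*n)))
    (h : (i : ℕ) + 1 = m + 2*n ∨ (i : ℕ) + 1 = 2*(m + 2*n)) :
    bigZ m n v i = 0 := by
  simp only [bigZ, Matrix.toLin'_apply, Matrix.mulVec, dotProduct, bigZMat]
  refine Finset.sum_eq_zero fun b _ => ?_
  rw [if_neg, zero_mul]
  have := b.isLt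
  omega

theorem proj_apply_left (m n : ℕ) (v : Fin (2*(m + 2*n)) → ℂ) (i : ℕ) (h : i < m + n) :
    proj m n v ⟨i, by omega⟩ = v ⟨i, by omega⟩ := by
  simp only [proj, Matrix.toLin'_apply, Matrix.mulVec, dotProduct, projMat]
  rw [Finset.sum_eq_single ⟨i, by omega⟩]
  · simp [h]
  · intro b _ hb
    rw [if_neg, zero_mul]
    rintro (⟨h1, _⟩ | ⟨_, h2⟩)
    · exact hb (Fin.ext h1)
    · omega
  · simp

theorem proj_apply_right (m n : ℕ) (v : Fin (2*(m + 2*n)) → ℂ) (i : ℕ) (h : m + n ≤ i)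
    (hi : i < m + 2*n) :
    proj m n v ⟨i, hi⟩ = v ⟨i + n, by omega⟩ := by
  simp only [proj, Matrix.toLin'_apply, Matrix.mulVec, dotProduct, projMat]
  rw [Finset.sum_eq_single ⟨i + n, by omega⟩]
  · simp [h]
  · intro b _ hb
    rw [if_neg, zero_mul]
    rintro (⟨_, h1⟩ | ⟨h2, _⟩)
    · omega
    · exact hb (Fin.ext h2)
  · simp

theorem zn_apply (m n : ℕ) (w : Fin (m + 2*n) → ℂ) (i : ℕ)
    (h : i + 1 < m + 2*n) (hne : i + 1 ≠ m + n) :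
    zn m n w ⟨i, by omega⟩ = w ⟨i + 1, h⟩ := by
  simp only [zn, Matrix.toLin'_apply, Matrix.mulVec, dotProduct, zMat]
  rw [Finset.sum_eq_single ⟨i + 1, h⟩]
  · simp [hne]
  · intro b _ hb
    rw [if_neg, zero_mul]
    rintro ⟨h1, _⟩
    exact hb (Fin.ext h1)
  · simp

/-- Outside rows `m+n` and `m+2n`, an element of `S_n'` acts as the coordinate shift. -/
theorem slice_apply (m n : ℕ) (x : Module.End ℂ (Fin (m + 2*n) → ℂ)) (hx : x ∈ slice' m n)
    (w : Fin (m + 2*n) → ℂ) (i : ℕ) (h : i + 1 < m + 2*n) (hne : i + 1 ≠ m + n) :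
    x w ⟨i, by omega⟩ = w ⟨i + 1, h⟩ := by
  have key : (LinearMap.proj (⟨i, by omega⟩ : Fin (m + 2*n)) : (Fin (m + 2*n) → ℂ) →ₗ[ℂ] ℂ) ∘ₗ
      (x - zn m n) = 0 := by
    refine (Pi.basisFun ℂ (Fin (m + 2*n))).ext fun j => ?_
    have hj : Pi.basisFun ℂ (Fin (m + 2*n)) j = stdVec m n ((j : ℕ) + 1) := by
      ext k
      simp [stdVec, Pi.single_apply, Fin.ext_iff]
    rw [hj]
    obtain ⟨a, b, hab⟩ := Submodule.mem_span_pair.1 (hx ((j : ℕ) + 1))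
    have h2 : i + 1 ≠ m + 2*n := by omega
    simp only [LinearMap.comp_apply, LinearMap.sub_apply, LinearMap.proj_apply,
      LinearMap.zero_apply]
    rw [← hab]
    simp [stdVec, hne, h2]
  have := LinearMap.congr_fun key w
  simp only [LinearMap.comp_apply, LinearMap.sub_apply, LinearMap.proj_apply,
    LinearMap.zero_apply, Pi.sub_apply, sub_eq_zero] at this
  rw [this, zn_apply m n w i h hne]

theorem slice_pow_apply (m n : ℕ) (x : Module.End ℂ (Fin (m + 2*n) → ℂ)) (hx : x ∈ slice' m n)
    (k : ℕ) (w : Fin (m + 2*n) → ℂ) (i : ℕ) (hi : i + k < m + 2*n)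
    (h : i + k < m + n ∨ m + n ≤ i) :
    (x ^ k) w ⟨i, by omega⟩ = w ⟨i + k, hi⟩ := by
  induction k generalizing w with
  | zero => simp
  | succ k ih =>
    rw [pow_succ, Module.End.mul_apply, ih _ (by omega) (by omega),
      slice_apply m n x hx w (i + k) (by omega) (by omega)]
    rfl

theorem bigZ_pow_apply (m n : ℕ) (k : ℕ) (v : Fin (2*(m + 2*n)) → ℂ) (i : ℕ)
    (hi : i + k < 2*(m + 2*n)) (h : i + k < m + 2*n ∨ m + 2*n ≤ i) :
    (bigZ m n ^ k) v ⟨i, by omega⟩ = v ⟨i + k, hi⟩ := by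
  induction k generalizing v with
  | zero => simp
  | succ k ih =>
    rw [pow_succ, Module.End.mul_apply, ih _ (by omega) (by omega),
      bigZ_apply_of_ne m n v (i + k) (by omega) (by omega)]
    rfl

/-- The section `s : W → V` of `P` determined by `x`: with both blocks indexed from `0`, the
`k`-th `ê`-coordinate of `s w` is the first coordinate of `x^k w`, and the `k`-th
`f̂`-coordinate is the `(m+n+1)`-st coordinate of `x^k w`. -/
def liftMap (m n : ℕ) (hn : 1 ≤ n) (x : Module.End ℂ (Fin (m + 2*n) → ℂ)) :
    (Fin (m + 2*n) → ℂ) →ₗ[ℂ] (Fin (2*(m + 2*n)) → ℂ) :=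
  LinearMap.pi fun i =>
    if (i : ℕ) < m + 2*n then
      LinearMap.proj (⟨0, by omega⟩ : Fin (m + 2*n)) ∘ₗ (x ^ (i : ℕ))
    else
      LinearMap.proj (⟨m + n, by omega⟩ : Fin (m + 2*n)) ∘ₗ (x ^ ((i : ℕ) - (m + 2*n)))

theorem liftMap_left (m n : ℕ) (hn : 1 ≤ n) (x : Module.End ℂ (Fin (m + 2*n) → ℂ))
    (w : Fin (m + 2*n) → ℂ) (i : Fin (2*(m + 2*n))) (h : (i : ℕ) < m + 2*n) :
    liftMap m n hn x w i = (x ^ (i : ℕ)) w ⟨0, by omega⟩ := by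
  simp [liftMap, h]

theorem liftMap_right (m n : ℕ) (hn : 1 ≤ n) (x : Module.End ℂ (Fin (m + 2*n) → ℂ))
    (w : Fin (m + 2*n) → ℂ) (i : Fin (2*(m + 2*n))) (k : ℕ) (h : (i : ℕ) = m + 2*n + k) :
    liftMap m n hn x w i = (x ^ k) w ⟨m + n, by omega⟩ := by
  simp [liftMap, h]

theorem proj_liftMap (m n : ℕ) (hn : 1 ≤ n) (x : Module.End ℂ (Fin (m + 2*n) → ℂ))
    (hx : x ∈ slice' m n) (w : Fin (m + 2*n) → ℂ) :
    proj m n (liftMap m n hn x w) = w := by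
  ext ⟨i, hi⟩
  by_cases h : i < m + n
  · rw [proj_apply_left m n _ i h, liftMap_left m n hn x w _ hi,
      slice_pow_apply m n x hx i w 0 (by omega) (by omega)]
    simp
  · obtain ⟨k, rfl⟩ := Nat.exists_eq_add_of_le (not_lt.1 h)
    rw [proj_apply_right m n _ _ (by omega) hi,
      liftMap_right m n hn x w _ k (by simp only; omega),
      slice_pow_apply m n x hx k w (m + n) hi (by omega)]

theorem bigZ_liftMap (m n : ℕ) (hn : 1 ≤ n) (x : Module.End ℂ (Fin (m + 2*n) → ℂ))
    (hnil : IsNilpotent x) (w : Fin (m + 2*n) → ℂ) :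
    bigZ m n (liftMap m n hn x w) = liftMap m n hn x (x w) := by
  have hN : x ^ (m + 2*n) = 0 := by
    have h := LinearMap.aeval_self_charpoly x
    rw [IsNilpotent.charpoly_eq_X_pow_finrank hnil] at h
    simpa using h
  have hstep : ∀ k, (x ^ k) (x w) = (x ^ (k + 1)) w := fun k => by
    rw [pow_succ, Module.End.mul_apply]
  ext ⟨i, hi⟩
  by_cases h : i < m + 2*n
  · rw [liftMap_left m n hn x (x w) _ h, hstep]
    by_cases hl : i + 1 = m + 2*n
    · rw [bigZ_apply_last m n _ _ (Or.inl hl)]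
      simp [hl, hN]
    · rw [bigZ_apply_of_ne m n _ i (by omega) hl,
        liftMap_left m n hn x w _ (by simp only; omega)]
  · obtain ⟨k, rfl⟩ := Nat.exists_eq_add_of_le (not_lt.1 h)
    rw [liftMap_right m n hn x (x w) _ k rfl, hstep]
    by_cases hl : k + 1 = m + 2*n
    · rw [bigZ_apply_last m n _ _ (Or.inr (by simp only; omega))]
      simp [hl, hN]
    · rw [bigZ_apply_of_ne m n _ _ (by omega) (by omega),
        liftMap_right m n hn x w _ (k + 1) (by simp only; omega)]

/-- Any vector of a `z`-stable subspace on which `P` intertwines `z` and `x` is recovered from its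
image under `P`. -/
theorem eq_liftMap_proj (m n : ℕ) (hn : 1 ≤ n) (x : Module.End ℂ (Fin (m + 2*n) → ℂ))
    (L : Submodule ℂ (Fin (2*(m + 2*n)) → ℂ)) (hz : ∀ v ∈ L, bigZ m n v ∈ L)
    (hP : ∀ v ∈ L, proj m n (bigZ m n v) = x (proj m n v))
    (v : Fin (2*(m + 2*n)) → ℂ) (hv : v ∈ L) :
    v = liftMap m n hn x (proj m n v) := by
  have hpow : ∀ k, ∀ v ∈ L, proj m n ((bigZ m n ^ k) v) = (x ^ k) (proj m n v) := by
    intro k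
    induction k with
    | zero => simp
    | succ k ih =>
      intro v hv
      rw [pow_succ, pow_succ, Module.End.mul_apply, Module.End.mul_apply, ih _ (hz v hv), hP v hv]
  ext ⟨i, hi⟩
  by_cases h : i < m + 2*n
  · rw [liftMap_left m n hn x _ _ h, ← hpow i v hv, proj_apply_left m n _ 0 (by omega),
      bigZ_pow_apply m n i v 0 (by omega) (by omega)]
    simp
  · obtain ⟨k, rfl⟩ := Nat.exists_eq_add_of_le (not_lt.1 h)
    rw [liftMap_right m n hn x _ _ k rfl, ← hpow k v hv,
      proj_apply_right m n _ (m + n) le_rfl (by omega),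
      bigZ_pow_apply m n k v (m + n + n) (by omega) (by omega)]
    congr 2
    omega

/-- For nilpotent `x ∈ S_n'` there is a unique subspace `L ⊆ V` such
that (i) `z L ⊆ L`, (ii) `P` restricts to a linear isomorphism from `L` onto
`W ≅ ℂ^(m+2n)`, and (iii) `P ∘ z ∘ (P|_L)⁻¹ = x`. -/
theorem exists_unique_z_stable_lift (m n : ℕ) (hn : 1 ≤ n)
    (x : Module.End ℂ (Fin (m + 2*n) → ℂ)) (hx : x ∈ slice' m n)
    (hnil : IsNilpotent x) :
    ∃! L : Submodule ℂ (Fin (2*(m + 2*n)) → ℂ),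
      (∀ v ∈ L, bigZ m n v ∈ L) ∧
      Function.Bijective ((proj m n).domRestrict L) ∧
      (∀ v ∈ L, proj m n (bigZ m n v) = x (proj m n v)) := by
  refine ⟨LinearMap.range (liftMap m n hn x), ⟨?_, ⟨?_, ?_⟩, ?_⟩, ?_⟩
  · rintro _ ⟨w, rfl⟩
    exact ⟨x w, (bigZ_liftMap m n hn x hnil w).symm⟩
  · rintro ⟨_, ⟨w, rfl⟩⟩ ⟨_, ⟨w', rfl⟩⟩ h
    simp only [LinearMap.domRestrict_apply, proj_liftMap m n hn x hx] at h
    subst h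
    rfl
  · intro w
    exact ⟨⟨_, ⟨w, rfl⟩⟩, proj_liftMap m n hn x hx w⟩
  · rintro _ ⟨w, rfl⟩
    rw [bigZ_liftMap m n hn x hnil, proj_liftMap m n hn x hx, proj_liftMap m n hn x hx]
  · rintro L ⟨hz, ⟨_, hsurj⟩, hP⟩
    apply le_antisymm
    · intro v hv
      exact ⟨proj m n v, (eq_liftMap_proj m n hn x L hz hP v hv).symm⟩
    · rintro _ ⟨w, rfl⟩
      obtain ⟨⟨v, hv⟩, rfl⟩ := hsurj w
      rw [LinearMap.domRestrict_apply, ← eq_liftMap_proj m n hn x L hz hP v hv]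
      exact hv
end
end
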